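/- arXiv:2409.00072 — 5 statements merged into one kernel-verified Lean document; each statement's English description precedes it below -/
import Mathlib

section
/- Let Σ and G be as in the Blanchard polynomial model described in the context. Then the quotient group Σ / G is a free abelian group of rank 4a, i.e. Σ / G ≅ ℤ^{4a}. -/
open Polynomial

/-- The fiberwise lattice `Γ(s) ⊆ ℂ²`, generated by the values at `s` of the four sections
`(σ₀, σ₁)`, `(i·σ₀, −i·σ₁)`, `(−σ₁, σ₀)`, `(−i·σ₁, −i·σ₀)` of the Blanchard construction. -/
noncomputable def Gam (σ₀ σ₁ : Polynomial ℂ) (s : ℂ) : AddSubgroup (ℂ × ℂ) :=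
  AddSubgroup.closure
    { (σ₀.eval s, σ₁.eval s),
      (Complex.I * σ₀.eval s, -(Complex.I * σ₁.eval s)),
      (-(σ₁.eval s), σ₀.eval s),
      (-(Complex.I * σ₁.eval s), -(Complex.I * σ₀.eval s)) }

/-- Evaluation of a pair of polynomials at `s`, as an additive group homomorphism. -/
noncomputable def evalPair (s : ℂ) : (Polynomial ℂ × Polynomial ℂ) →+ ℂ × ℂ :=
  AddMonoidHom.prodMap (Polynomial.evalRingHom s).toAddMonoidHom
    (Polynomial.evalRingHom s).toAddMonoidHom

/-- The group `Σ` of pairs `(p, q)` of polynomials of degree at most `a` whose value at each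
`tᵢ` lies in the lattice `Γ(tᵢ)`. -/
noncomputable def Sig (a : ℕ) (t : Fin (a + 1) → ℂ) (σ₀ σ₁ : Polynomial ℂ) :
    AddSubgroup (Polynomial ℂ × Polynomial ℂ) :=
  AddSubgroup.prod (Polynomial.degreeLE ℂ (a : WithBot ℕ)).toAddSubgroup
      (Polynomial.degreeLE ℂ (a : WithBot ℕ)).toAddSubgroup ⊓
    ⨅ i : Fin (a + 1), AddSubgroup.comap (evalPair (t i)) (Gam σ₀ σ₁ (t i))

/-- The subgroup `G` generated by the four pairs
`(σ₀, σ₁)`, `(i·σ₀, −i·σ₁)`, `(−σ₁, σ₀)`, `(−i·σ₁, −i·σ₀)`. -/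
noncomputable def Gsub (σ₀ σ₁ : Polynomial ℂ) : AddSubgroup (Polynomial ℂ × Polynomial ℂ) :=
  AddSubgroup.closure
    { (σ₀, σ₁),
      (Polynomial.C Complex.I * σ₀, -(Polynomial.C Complex.I * σ₁)),
      (-σ₁, σ₀),
      (-(Polynomial.C Complex.I * σ₁), -(Polynomial.C Complex.I * σ₀)) }

/-- The four generators. -/
noncomputable def gen4 (σ₀ σ₁ : Polynomial ℂ) : Fin 4 → Polynomial ℂ × Polynomial ℂ :=
  ![(σ₀, σ₁),
    (Polynomial.C Complex.I * σ₀, -(Polynomial.C Complex.I * σ₁)),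
    (-σ₁, σ₀),
    (-(Polynomial.C Complex.I * σ₁), -(Polynomial.C Complex.I * σ₀))]

/-- Integer combinations of the generators. -/
noncomputable def Mhom (σ₀ σ₁ : Polynomial ℂ) :
    (Fin 4 → ℤ) →+ Polynomial ℂ × Polynomial ℂ :=
  (Fintype.linearCombination ℤ (gen4 σ₀ σ₁)).toAddMonoidHom

lemma Mhom_apply (σ₀ σ₁ : Polynomial ℂ) (c : Fin 4 → ℤ) :
    Mhom σ₀ σ₁ c = ∑ j, c j • gen4 σ₀ σ₁ j := rfl

lemma Mhom_range (σ₀ σ₁ : Polynomial ℂ) : (Mhom σ₀ σ₁).range = Gsub σ₀ σ₁ := by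
  have hG : Gsub σ₀ σ₁ = AddSubgroup.closure (Set.range (gen4 σ₀ σ₁)) := by
    unfold Gsub
    congr 1
    ext x
    simp [gen4]
    tauto
  rw [hG]
  apply le_antisymm
  · rintro _ ⟨c, rfl⟩
    rw [Mhom_apply]
    exact AddSubgroup.sum_mem _ fun j _ =>
      AddSubgroup.zsmul_mem _ (AddSubgroup.subset_closure (Set.mem_range_self j)) _
  · rw [AddSubgroup.closure_le]
    rintro _ ⟨j, rfl⟩
    refine ⟨Pi.single j 1, ?_⟩
    rw [Mhom_apply, Finset.sum_eq_single j]
    · simp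
    · intro b _ hb
      simp [hb]
    · simp

lemma evalPair_apply (s : ℂ) (x : Polynomial ℂ × Polynomial ℂ) :
    evalPair s x = (x.1.eval s, x.2.eval s) := rfl

/-- Integer combinations of the values of the generators. -/
noncomputable def Lhom (σ₀ σ₁ : Polynomial ℂ) (s : ℂ) : (Fin 4 → ℤ) →+ ℂ × ℂ :=
  (evalPair s).comp (Mhom σ₀ σ₁)

lemma Lhom_range (σ₀ σ₁ : Polynomial ℂ) (s : ℂ) : (Lhom σ₀ σ₁ s).range = Gam σ₀ σ₁ s := by
  rw [Lhom, AddMonoidHom.range_comp, Mhom_range, Gsub, AddMonoidHom.map_closure, Gam]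
  simp [Set.image_insert_eq, evalPair_apply]

lemma Lhom_inj (σ₀ σ₁ : Polynomial ℂ) (s : ℂ) (h : (σ₀.eval s, σ₁.eval s) ≠ (0, 0)) :
    Function.Injective (Lhom σ₀ σ₁ s) := by
  rw [injective_iff_map_eq_zero]
  intro c hc
  simp only [Lhom, AddMonoidHom.comp_apply, Mhom_apply, evalPair_apply, Fin.sum_univ_four, gen4,
    Prod.mk_eq_zero] at hc
  simp at hc
  generalize σ₀.eval s = u at *
  generalize σ₁.eval s = v at *
  obtain ⟨e1, e2⟩ := hc
  have hpos : 0 < u.re ^ 2 + u.im ^ 2 + v.re ^ 2 + v.im ^ 2 := by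
    by_contra hn
    apply h
    have a1 : u.re = 0 := by nlinarith [sq_nonneg u.re, sq_nonneg u.im, sq_nonneg v.re, sq_nonneg v.im]
    have a2 : u.im = 0 := by nlinarith [sq_nonneg u.re, sq_nonneg u.im, sq_nonneg v.re, sq_nonneg v.im]
    have a3 : v.re = 0 := by nlinarith [sq_nonneg u.re, sq_nonneg u.im, sq_nonneg v.re, sq_nonneg v.im]
    have a4 : v.im = 0 := by nlinarith [sq_nonneg u.re, sq_nonneg u.im, sq_nonneg v.re, sq_nonneg v.im]
    exact Prod.ext (Complex.ext a1 a2) (Complex.ext a3 a4)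
  have r1 := congrArg Complex.re e1
  have i1 := congrArg Complex.im e1
  have r2 := congrArg Complex.re e2
  have i2 := congrArg Complex.im e2
  simp at r1 i1 r2 i2
  have k0 : (u.re ^ 2 + u.im ^ 2 + v.re ^ 2 + v.im ^ 2) * (c 0 : ℝ) = 0 := by
    linear_combination u.re * r1 + u.im * i1 + v.re * r2 + v.im * i2
  have k1 : (u.re ^ 2 + u.im ^ 2 + v.re ^ 2 + v.im ^ 2) * (c 1 : ℝ) = 0 := by
    linear_combination -u.im * r1 + u.re * i1 + v.im * r2 - v.re * i2
  have k2 : (u.re ^ 2 + u.im ^ 2 + v.re ^ 2 + v.im ^ 2) * (c 2 : ℝ) = 0 := by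
    linear_combination -v.re * r1 - v.im * i1 + u.re * r2 + u.im * i2
  have k3 : (u.re ^ 2 + u.im ^ 2 + v.re ^ 2 + v.im ^ 2) * (c 3 : ℝ) = 0 := by
    linear_combination v.im * r1 - v.re * i1 + u.im * r2 - u.re * i2
  have hne := hpos.ne'
  simp only [mul_eq_zero, hne, false_or, Int.cast_eq_zero] at k0 k1 k2 k3
  funext j
  fin_cases j <;> assumption

lemma mem_Sig {a : ℕ} {t : Fin (a + 1) → ℂ} {σ₀ σ₁ : Polynomial ℂ}
    {x : Polynomial ℂ × Polynomial ℂ} : x ∈ Sig a t σ₀ σ₁ ↔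
      (x.1.degree ≤ (a : WithBot ℕ) ∧ x.2.degree ≤ (a : WithBot ℕ)) ∧
        ∀ i, evalPair (t i) x ∈ Gam σ₀ σ₁ (t i) := by
  simp [Sig, AddSubgroup.mem_prod, AddSubgroup.mem_inf, AddSubgroup.mem_iInf,
    Polynomial.mem_degreeLE]

lemma poly_ext {a : ℕ} {t : Fin (a + 1) → ℂ} (ht : Function.Injective t) {p q : Polynomial ℂ}
    (hp : p.degree ≤ (a : WithBot ℕ)) (hq : q.degree ≤ (a : WithBot ℕ))
    (h : ∀ i, p.eval (t i) = q.eval (t i)) : p = q := by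
  have hlt : (a : WithBot ℕ) < ((Finset.univ : Finset (Fin (a + 1))).card : WithBot ℕ) := by
    rw [Finset.card_univ, Fintype.card_fin]
    exact_mod_cast Nat.lt_succ_self a
  exact Polynomial.eq_of_degrees_lt_of_eval_index_eq Finset.univ (v := t) ht.injOn
    (hp.trans_lt hlt) (hq.trans_lt hlt) (fun i _ => h i)

lemma poly_exists {a : ℕ} {t : Fin (a + 1) → ℂ} (ht : Function.Injective t)
    (r : Fin (a + 1) → ℂ) :
    ∃ p : Polynomial ℂ, p.degree ≤ (a : WithBot ℕ) ∧ ∀ i, p.eval (t i) = r i := by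
  refine ⟨Lagrange.interpolate Finset.univ t r, ?_, fun i =>
    Lagrange.eval_interpolate_at_node r ht.injOn (Finset.mem_univ i)⟩
  simpa using Lagrange.degree_interpolate_le r (s := Finset.univ) (v := t) ht.injOn

lemma exists_coord (a : ℕ) (t : Fin (a + 1) → ℂ) (σ₀ σ₁ : Polynomial ℂ)
    (hnz : ∀ i, (σ₀.eval (t i), σ₁.eval (t i)) ≠ (0, 0)) (i : Fin (a + 1)) :
    ∃ K : Sig a t σ₀ σ₁ →+ (Fin 4 → ℤ),
      ∀ x, Lhom σ₀ σ₁ (t i) (K x) = evalPair (t i) (x : Polynomial ℂ × Polynomial ℂ) := by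
  have hinj := Lhom_inj σ₀ σ₁ (t i) (hnz i)
  have hex : ∀ x : Sig a t σ₀ σ₁, ∃ c, Lhom σ₀ σ₁ (t i) c = evalPair (t i) x.1 := by
    intro x
    have := (mem_Sig.1 x.2).2 i
    rwa [← Lhom_range] at this
  choose K hK using hex
  exact ⟨AddMonoidHom.mk' K fun x y => hinj (by simp [hK, map_add]), hK⟩

/-- In the Blanchard polynomial model, the quotient group `Σ / G` is a free
abelian group of rank `4a`, i.e. `Σ / G ≅ ℤ^{4a}`. -/
theorem sigma_quotient_G_free_abelian_rank_four_a
    (a : ℕ) (ha : 1 ≤ a) (t : Fin (a + 1) → ℂ) (ht : Function.Injective t)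
    (σ₀ σ₁ : Polynomial ℂ)
    (h0 : σ₀.degree ≤ (a : WithBot ℕ)) (h1 : σ₁.degree ≤ (a : WithBot ℕ))
    (hnz : ∀ i, (σ₀.eval (t i), σ₁.eval (t i)) ≠ (0, 0)) :
    Nonempty
      ((↥(Sig a t σ₀ σ₁) ⧸ (Gsub σ₀ σ₁).addSubgroupOf (Sig a t σ₀ σ₁)) ≃+ (Fin (4 * a) → ℤ)) := by
  have hinj := fun i => Lhom_inj σ₀ σ₁ (t i) (hnz i)
  choose K hK using exists_coord a t σ₀ σ₁ hnz
  have hMdeg : ∀ c, (Mhom σ₀ σ₁ c).1.degree ≤ (a : WithBot ℕ) ∧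
      (Mhom σ₀ σ₁ c).2.degree ≤ (a : WithBot ℕ) := by
    have hle : Gsub σ₀ σ₁ ≤ AddSubgroup.prod
        (Polynomial.degreeLE ℂ (a : WithBot ℕ)).toAddSubgroup
        (Polynomial.degreeLE ℂ (a : WithBot ℕ)).toAddSubgroup := by
      rw [Gsub, AddSubgroup.closure_le]
      have e0 := Polynomial.mem_degreeLE.2 h0
      have e1 := Polynomial.mem_degreeLE.2 h1
      have f0 : Polynomial.C Complex.I * σ₀ ∈ Polynomial.degreeLE ℂ (a : WithBot ℕ) := by
        rw [← Polynomial.smul_eq_C_mul]; exact Submodule.smul_mem _ _ e0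
      have f1 : Polynomial.C Complex.I * σ₁ ∈ Polynomial.degreeLE ℂ (a : WithBot ℕ) := by
        rw [← Polynomial.smul_eq_C_mul]; exact Submodule.smul_mem _ _ e1
      rintro x (rfl | rfl | rfl | rfl)
      · exact ⟨e0, e1⟩
      · exact ⟨f0, Submodule.neg_mem _ f1⟩
      · exact ⟨Submodule.neg_mem _ e1, e0⟩
      · exact ⟨Submodule.neg_mem _ f1, Submodule.neg_mem _ f0⟩
    intro c
    have hm : Mhom σ₀ σ₁ c ∈ Gsub σ₀ σ₁ := Mhom_range σ₀ σ₁ ▸ ⟨c, rfl⟩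
    have := hle hm
    exact ⟨Polynomial.mem_degreeLE.1 this.1, Polynomial.mem_degreeLE.1 this.2⟩
  let D : Sig a t σ₀ σ₁ →+ (Fin a → Fin 4 → ℤ) :=
    AddMonoidHom.mk' (fun x i => K i.succ x - K 0 x) (by
      intro x y
      funext i
      simp only [map_add, Pi.add_apply]
      abel)
  have hD : ∀ x i, D x i = K i.succ x - K 0 x := fun _ _ => rfl
  have hker : (Gsub σ₀ σ₁).addSubgroupOf (Sig a t σ₀ σ₁) = D.ker := by
    ext x
    rw [AddSubgroup.mem_addSubgroupOf, AddMonoidHom.mem_ker, ← Mhom_range]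
    constructor
    · rintro ⟨c, hc⟩
      have hKc : ∀ i, K i x = c := fun i => hinj i (by rw [hK, ← hc]; rfl)
      funext i
      simp [hD, hKc]
    · intro h
      refine ⟨K 0 x, ?_⟩
      have hall : ∀ i, K i x = K 0 x := by
        intro i
        refine Fin.cases rfl (fun j => ?_) i
        have := congrFun h j
        rw [hD] at this
        exact sub_eq_zero.1 this
      have hev : ∀ i, evalPair (t i) (Mhom σ₀ σ₁ (K 0 x)) = evalPair (t i) x.1 := by
        intro i
        rw [← hK i x, hall i]; rfl
      have hdx := (mem_Sig.1 x.2).1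
      exact Prod.ext
        (poly_ext ht (hMdeg _).1 hdx.1 fun i => congrArg Prod.fst (hev i))
        (poly_ext ht (hMdeg _).2 hdx.2 fun i => congrArg Prod.snd (hev i))
  have hsurj : Function.Surjective D := by
    intro d
    let c : Fin (a + 1) → Fin 4 → ℤ := Fin.cons 0 d
    obtain ⟨p, hp, hpe⟩ := poly_exists ht fun i => (Lhom σ₀ σ₁ (t i) (c i)).1
    obtain ⟨q, hq, hqe⟩ := poly_exists ht fun i => (Lhom σ₀ σ₁ (t i) (c i)).2
    have hev : ∀ i, evalPair (t i) (p, q) = Lhom σ₀ σ₁ (t i) (c i) :=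
      fun i => Prod.ext (hpe i) (hqe i)
    have hmem : (p, q) ∈ Sig a t σ₀ σ₁ := by
      refine mem_Sig.2 ⟨⟨hp, hq⟩, fun i => ?_⟩
      rw [hev, ← Lhom_range]
      exact ⟨_, rfl⟩
    refine ⟨⟨(p, q), hmem⟩, ?_⟩
    have hKc : ∀ i, K i ⟨(p, q), hmem⟩ = c i := fun i => hinj i (by rw [hK, hev])
    funext i
    rw [hD, hKc, hKc]
    simp [c]
  have e : (Fin a → Fin 4 → ℤ) ≃ₗ[ℤ] (Fin (4 * a) → ℤ) :=
    LinearEquiv.ofFinrankEq _ _ (by simp [Module.finrank_pi_fintype, mul_comm])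
  exact ⟨(QuotientAddGroup.quotientAddEquivOfEq hker).trans
    ((QuotientAddGroup.quotientKerEquivOfSurjective D hsurj).trans e.toAddEquiv)⟩
end

section
/- Let Σ and Γ(tᵢ) be as in the Blanchard polynomial model described in the context. Then the evaluation map (p, q) ↦ ((p(t₀), q(t₀)), …, (p(t_a), q(t_a))) restricts to an isomorphism of additive groups from Σ onto the product Γ(t₀) × ⋯ × Γ(t_a); in particular Σ is a free abelian group of rank 4(a+1), i.e. Σ ≅ ℤ^{4a+4}. -/
open Polynomial

/-- The integral linear combination of the four generators of the lattice `Γ(s)`. -/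
noncomputable def latHom (x y : ℂ) : (Fin 4 → ℤ) →+ ℂ × ℂ where
  toFun c := (((c 0 : ℂ) + Complex.I * c 1) * x - ((c 2 : ℂ) + Complex.I * c 3) * y,
    ((c 0 : ℂ) - Complex.I * c 1) * y + ((c 2 : ℂ) - Complex.I * c 3) * x)
  map_zero' := by simp
  map_add' c d := by
    ext
    · simp only [Pi.add_apply, Int.cast_add, Prod.fst_add]; ring
    · simp only [Pi.add_apply, Int.cast_add, Prod.snd_add]; ring

theorem latHom_injective (x y : ℂ) (h : (x, y) ≠ (0, 0)) :
    Function.Injective (latHom x y) := by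
  rw [injective_iff_map_eq_zero]
  intro c hc
  have e1 : ((c 0 : ℂ) + Complex.I * c 1) * x - ((c 2 : ℂ) + Complex.I * c 3) * y = 0 :=
    congrArg Prod.fst hc
  have e2 : ((c 0 : ℂ) - Complex.I * c 1) * y + ((c 2 : ℂ) - Complex.I * c 3) * x = 0 :=
    congrArg Prod.snd hc
  have hI : Complex.I * Complex.I = -1 := Complex.I_mul_I
  have hx : ((c 0 : ℂ) ^ 2 + (c 1 : ℂ) ^ 2 + (c 2 : ℂ) ^ 2 + (c 3 : ℂ) ^ 2) * x = 0 := by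
    linear_combination ((c 0 : ℂ) - Complex.I * c 1) * e1 + ((c 2 : ℂ) + Complex.I * c 3) * e2
      + ((c 1 : ℂ) ^ 2 + (c 3 : ℂ) ^ 2) * x * hI
  have hy : ((c 0 : ℂ) ^ 2 + (c 1 : ℂ) ^ 2 + (c 2 : ℂ) ^ 2 + (c 3 : ℂ) ^ 2) * y = 0 := by
    linear_combination ((c 0 : ℂ) + Complex.I * c 1) * e2 - ((c 2 : ℂ) - Complex.I * c 3) * e1
      + ((c 1 : ℂ) ^ 2 + (c 3 : ℂ) ^ 2) * y * hI
  have hN : (c 0 : ℂ) ^ 2 + (c 1 : ℂ) ^ 2 + (c 2 : ℂ) ^ 2 + (c 3 : ℂ) ^ 2 = 0 := by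
    by_contra hN
    exact h (Prod.ext ((mul_eq_zero.1 hx).resolve_left hN) ((mul_eq_zero.1 hy).resolve_left hN))
  have hZ : (c 0) ^ 2 + (c 1) ^ 2 + (c 2) ^ 2 + (c 3) ^ 2 = 0 := by exact_mod_cast hN
  have p0 := sq_nonneg (c 0)
  have p1 := sq_nonneg (c 1)
  have p2 := sq_nonneg (c 2)
  have p3 := sq_nonneg (c 3)
  have q0 : c 0 = 0 := pow_eq_zero_iff two_ne_zero |>.1 (by linarith)
  have q1 : c 1 = 0 := pow_eq_zero_iff two_ne_zero |>.1 (by linarith)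
  have q2 : c 2 = 0 := pow_eq_zero_iff two_ne_zero |>.1 (by linarith)
  have q3 : c 3 = 0 := pow_eq_zero_iff two_ne_zero |>.1 (by linarith)
  funext j
  fin_cases j <;> simpa

theorem latHom_range (σ₀ σ₁ : Polynomial ℂ) (s : ℂ) :
    (latHom (σ₀.eval s) (σ₁.eval s)).range = Gam σ₀ σ₁ s := by
  apply le_antisymm
  · rintro _ ⟨c, rfl⟩
    have key : latHom (σ₀.eval s) (σ₁.eval s) c =
        c 0 • (σ₀.eval s, σ₁.eval s)
        + c 1 • (Complex.I * σ₀.eval s, -(Complex.I * σ₁.eval s))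
        + c 2 • (-(σ₁.eval s), σ₀.eval s)
        + c 3 • (-(Complex.I * σ₁.eval s), -(Complex.I * σ₀.eval s)) := by
      ext
      · simp [latHom]; ring
      · simp [latHom]; ring
    rw [key]
    unfold Gam
    refine add_mem (add_mem (add_mem ?_ ?_) ?_) ?_ <;>
      exact zsmul_mem (AddSubgroup.subset_closure (by simp)) _
  · unfold Gam
    rw [AddSubgroup.closure_le]
    rintro _ (rfl | rfl | rfl | rfl)
    · exact ⟨![1, 0, 0, 0], by simp [latHom]⟩
    · exact ⟨![0, 1, 0, 0], by simp [latHom]⟩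
    · exact ⟨![0, 0, 1, 0], by simp [latHom]⟩
    · exact ⟨![0, 0, 0, 1], by simp [latHom]⟩

theorem mem_Sig_iff (a : ℕ) (t : Fin (a + 1) → ℂ) (σ₀ σ₁ : Polynomial ℂ)
    (x : Polynomial ℂ × Polynomial ℂ) :
    x ∈ Sig a t σ₀ σ₁ ↔ (x.1.degree ≤ (a : WithBot ℕ) ∧ x.2.degree ≤ (a : WithBot ℕ)) ∧
      ∀ i, (x.1.eval (t i), x.2.eval (t i)) ∈ Gam σ₀ σ₁ (t i) := by
  simp only [Sig, AddSubgroup.mem_inf, AddSubgroup.mem_prod, Submodule.mem_toAddSubgroup,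
    Polynomial.mem_degreeLE, AddSubgroup.mem_iInf, AddSubgroup.mem_comap]
  rfl

theorem poly_eq_of_eval (a : ℕ) (t : Fin (a + 1) → ℂ) (ht : Function.Injective t)
    (p q : Polynomial ℂ) (hp : p.degree ≤ (a : WithBot ℕ)) (hq : q.degree ≤ (a : WithBot ℕ))
    (h : ∀ i, p.eval (t i) = q.eval (t i)) : p = q := by
  have hlt : (a : WithBot ℕ) < ((Finset.univ : Finset (Fin (a + 1))).card : WithBot ℕ) := by
    rw [Finset.card_univ, Fintype.card_fin]
    exact_mod_cast Nat.lt_succ_self a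
  exact Polynomial.eq_of_degrees_lt_of_eval_index_eq Finset.univ ht.injOn
    (hp.trans_lt hlt) (hq.trans_lt hlt) fun i _ => h i

theorem exists_poly_eval (a : ℕ) (t : Fin (a + 1) → ℂ) (ht : Function.Injective t)
    (r : Fin (a + 1) → ℂ) :
    ∃ p : Polynomial ℂ, p.degree ≤ (a : WithBot ℕ) ∧ ∀ i, p.eval (t i) = r i := by
  refine ⟨Lagrange.interpolate Finset.univ t r, ?_, fun i =>
    Lagrange.eval_interpolate_at_node r ht.injOn (Finset.mem_univ i)⟩
  have := Lagrange.degree_interpolate_le (s := Finset.univ) r ht.injOn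
  simpa using this

/-- Evaluation at the points `tᵢ` as a homomorphism from `Σ` to the product of lattices. -/
noncomputable def sigEval (a : ℕ) (t : Fin (a + 1) → ℂ) (σ₀ σ₁ : Polynomial ℂ) :
    ↥(Sig a t σ₀ σ₁) →+ (∀ i : Fin (a + 1), ↥(Gam σ₀ σ₁ (t i))) where
  toFun x i := ⟨(x.1.1.eval (t i), x.1.2.eval (t i)), ((mem_Sig_iff a t σ₀ σ₁ x.1).1 x.2).2 i⟩
  map_zero' := by
    funext i
    apply Subtype.ext
    simp
  map_add' x y := by
    funext i
    apply Subtype.ext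
    simp

theorem sigEval_bijective (a : ℕ) (t : Fin (a + 1) → ℂ) (ht : Function.Injective t)
    (σ₀ σ₁ : Polynomial ℂ) : Function.Bijective (sigEval a t σ₀ σ₁) := by
  constructor
  · intro x y hxy
    have hx := (mem_Sig_iff a t σ₀ σ₁ x.1).1 x.2
    have hy := (mem_Sig_iff a t σ₀ σ₁ y.1).1 y.2
    have h : ∀ i, (x.1.1.eval (t i), x.1.2.eval (t i)) = (y.1.1.eval (t i), y.1.2.eval (t i)) :=
      fun i => congrArg Subtype.val (congrFun hxy i)
    exact Subtype.ext (Prod.ext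
      (poly_eq_of_eval a t ht _ _ hx.1.1 hy.1.1 fun i => congrArg Prod.fst (h i))
      (poly_eq_of_eval a t ht _ _ hx.1.2 hy.1.2 fun i => congrArg Prod.snd (h i)))
  · intro g
    obtain ⟨p, hp, hpe⟩ := exists_poly_eval a t ht fun i => (g i).1.1
    obtain ⟨q, hq, hqe⟩ := exists_poly_eval a t ht fun i => (g i).1.2
    have hv : ∀ i, (p.eval (t i), q.eval (t i)) = (g i).1 := fun i => Prod.ext (hpe i) (hqe i)
    refine ⟨⟨(p, q), (mem_Sig_iff a t σ₀ σ₁ (p, q)).2 ⟨⟨hp, hq⟩, fun i => ?_⟩⟩, ?_⟩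
    · change (p.eval (t i), q.eval (t i)) ∈ _
      rw [hv i]
      exact (g i).2
    · funext i
      exact Subtype.ext (hv i)

/-- The evaluation map `(p, q) ↦ ((p(t₀), q(t₀)), …, (p(t_a), q(t_a)))`
restricts to an isomorphism of additive groups from `Σ` onto `Γ(t₀) × ⋯ × Γ(t_a)`;
in particular `Σ` is free abelian of rank `4(a+1)`, i.e. `Σ ≅ ℤ^{4a+4}`. -/
theorem sigma_eval_equiv_prod_lattices
    (a : ℕ) (ha : 1 ≤ a) (t : Fin (a + 1) → ℂ) (ht : Function.Injective t)
    (σ₀ σ₁ : Polynomial ℂ)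
    (h0 : σ₀.degree ≤ (a : WithBot ℕ)) (h1 : σ₁.degree ≤ (a : WithBot ℕ))
    (hnz : ∀ i, (σ₀.eval (t i), σ₁.eval (t i)) ≠ (0, 0)) :
    (∃ e : ↥(Sig a t σ₀ σ₁) ≃+ (∀ i : Fin (a + 1), ↥(Gam σ₀ σ₁ (t i))),
        ∀ x : ↥(Sig a t σ₀ σ₁), ∀ i : Fin (a + 1),
          ((e x i : ℂ × ℂ)) =
            ((x : Polynomial ℂ × Polynomial ℂ).1.eval (t i),
             (x : Polynomial ℂ × Polynomial ℂ).2.eval (t i))) ∧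
      Nonempty (↥(Sig a t σ₀ σ₁) ≃+ (Fin (4 * a + 4) → ℤ)) := by
  let e := AddEquiv.ofBijective (sigEval a t σ₀ σ₁) (sigEval_bijective a t ht σ₀ σ₁)
  refine ⟨⟨e, fun x i => rfl⟩, ⟨?_⟩⟩
  let f : ∀ i : Fin (a + 1), (Fin 4 → ℤ) ≃+ ↥(Gam σ₀ σ₁ (t i)) := fun i =>
    (AddMonoidHom.ofInjective (latHom_injective _ _ (hnz i))).trans
      (AddEquiv.addSubgroupCongr (latHom_range σ₀ σ₁ (t i)))
  let u : (Fin (a + 1) → Fin 4 → ℤ) ≃+ (Fin (a + 1) × Fin 4 → ℤ) :=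
    { (Equiv.curry (Fin (a + 1)) (Fin 4) ℤ).symm with map_add' := fun _ _ => rfl }
  let w : Fin (a + 1) × Fin 4 ≃ Fin (4 * a + 4) :=
    finProdFinEquiv.trans (finCongr (by ring))
  let z : (Fin (a + 1) × Fin 4 → ℤ) ≃+ (Fin (4 * a + 4) → ℤ) :=
    { Equiv.arrowCongr w (Equiv.refl ℤ) with map_add' := fun _ _ => rfl }
  exact ((e.trans (AddEquiv.piCongrRight f).symm).trans u).trans z
end

section
/- Let Γ(s) and G be as in the context. If (p, q) is a pair of complex polynomials of degree at most a such that (p(s), q(s)) ∈ Γ(s) for every s ∈ ℂ, then (p, q) belongs to G, i.e. (p, q) is a ℤ-linear combination of the four pairs (σ₀, σ₁), (i·σ₀, −i·σ₁), (−σ₁, σ₀), (−i·σ₁, −i·σ₀). Conversely, every element of G satisfies (p(s), q(s)) ∈ Γ(s) for every s ∈ ℂ. -/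
open Polynomial

theorem mem_closure_four {A : Type*} [AddCommGroup A] (a b c d x : A) :
    x ∈ AddSubgroup.closure ({a, b, c, d} : Set A) ↔
      ∃ n : ℤ × ℤ × ℤ × ℤ, n.1 • a + (n.2.1 • b + (n.2.2.1 • c + n.2.2.2 • d)) = x := by
  rw [Set.insert_eq a, Set.insert_eq b, Set.insert_eq c]
  simp only [AddSubgroup.closure_union, AddSubgroup.mem_sup, AddSubgroup.mem_closure_singleton]
  constructor
  · rintro ⟨_, ⟨k, rfl⟩, _, ⟨_, ⟨l, rfl⟩, _, ⟨_, ⟨m, rfl⟩, _, ⟨n, rfl⟩, rfl⟩, rfl⟩, rfl⟩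
    exact ⟨(k, l, m, n), rfl⟩
  · rintro ⟨⟨k, l, m, n⟩, rfl⟩
    exact ⟨_, ⟨k, rfl⟩, _, ⟨_, ⟨l, rfl⟩, _, ⟨_, ⟨m, rfl⟩, _, ⟨n, rfl⟩, rfl⟩, rfl⟩, rfl⟩

/-- Evaluation at `s` of the combination of the four sections with coefficients `n`. -/
theorem evalPair_comb (σ₀ σ₁ : Polynomial ℂ) (s : ℂ) (n : ℤ × ℤ × ℤ × ℤ) :
    evalPair s (n.1 • (σ₀, σ₁) +
      (n.2.1 • (Polynomial.C Complex.I * σ₀, -(Polynomial.C Complex.I * σ₁)) +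
      (n.2.2.1 • (-σ₁, σ₀) +
        n.2.2.2 • (-(Polynomial.C Complex.I * σ₁), -(Polynomial.C Complex.I * σ₀))))) =
    n.1 • (σ₀.eval s, σ₁.eval s) +
      (n.2.1 • (Complex.I * σ₀.eval s, -(Complex.I * σ₁.eval s)) +
      (n.2.2.1 • (-(σ₁.eval s), σ₀.eval s) +
        n.2.2.2 • (-(Complex.I * σ₁.eval s), -(Complex.I * σ₀.eval s)))) := by
  simp only [map_add, map_zsmul]
  simp [evalPair]

/-- A pair `(p, q)` of polynomials of degree at most `a` satisfies
`(p(s), q(s)) ∈ Γ(s)` for every `s ∈ ℂ` if and only if it belongs to `G`, i.e. it is a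
`ℤ`-linear combination of `(σ₀, σ₁)`, `(i·σ₀, −i·σ₁)`, `(−σ₁, σ₀)`, `(−i·σ₁, −i·σ₀)`;
conversely every element of `G` takes values in the lattices `Γ(s)`. -/
theorem pair_in_all_lattices_iff_mem_G
    (a : ℕ) (ha : 1 ≤ a) (σ₀ σ₁ : Polynomial ℂ)
    (h0 : σ₀.degree ≤ (a : WithBot ℕ)) (h1 : σ₁.degree ≤ (a : WithBot ℕ)) :
    (∀ p q : Polynomial ℂ, p.degree ≤ (a : WithBot ℕ) → q.degree ≤ (a : WithBot ℕ) →
        (∀ s : ℂ, (p.eval s, q.eval s) ∈ Gam σ₀ σ₁ s) → (p, q) ∈ Gsub σ₀ σ₁) ∧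
      ∀ x ∈ Gsub σ₀ σ₁, ∀ s : ℂ,
        ((x : Polynomial ℂ × Polynomial ℂ).1.eval s,
         (x : Polynomial ℂ × Polynomial ℂ).2.eval s) ∈ Gam σ₀ σ₁ s := by
  constructor
  · intro p q _ _ h
    unfold Gsub
    rw [mem_closure_four]
    by_contra! hne
    have hfin : ∀ n : ℤ × ℤ × ℤ × ℤ, {s : ℂ | n.1 • (σ₀.eval s, σ₁.eval s) +
      (n.2.1 • (Complex.I * σ₀.eval s, -(Complex.I * σ₁.eval s)) +
      (n.2.2.1 • (-(σ₁.eval s), σ₀.eval s) +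
        n.2.2.2 • (-(Complex.I * σ₁.eval s), -(Complex.I * σ₀.eval s)))) =
          (p.eval s, q.eval s)}.Finite := by
      intro n
      by_contra hinf
      apply hne n
      apply Prod.ext
      · refine Polynomial.eq_of_infinite_eval_eq _ _ (Set.Infinite.mono ?_ hinf)
        intro s hs
        exact congrArg Prod.fst ((evalPair_comb σ₀ σ₁ s n).trans hs)
      · refine Polynomial.eq_of_infinite_eval_eq _ _ (Set.Infinite.mono ?_ hinf)
        intro s hs
        exact congrArg Prod.snd ((evalPair_comb σ₀ σ₁ s n).trans hs)
    have hc := Set.countable_iUnion fun n => (hfin n).countable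
    refine not_countable_complex (hc.mono ?_)
    intro s _
    have hs := h s
    unfold Gam at hs
    rw [mem_closure_four] at hs
    exact Set.mem_iUnion.2 hs
  · intro x hx s
    unfold Gsub at hx
    unfold Gam
    rw [mem_closure_four] at hx ⊢
    obtain ⟨n, rfl⟩ := hx
    exact ⟨n, (evalPair_comb σ₀ σ₁ s n).symm⟩
end

section
/- Let Γ(s) and G be as in the context. For any pair (p, q) of complex polynomials of degree at most a, the set { s ∈ ℂ : (p(s), q(s)) ∈ Γ(s) } is either equal to all of ℂ — which happens if and only if (p, q) ∈ G — or it is countable. -/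
open Polynomial

theorem Gam_eq_map (σ₀ σ₁ : Polynomial ℂ) (s : ℂ) :
    Gam σ₀ σ₁ s = (Gsub σ₀ σ₁).map (evalPair s) := by
  simp [Gam, Gsub, AddMonoidHom.map_closure, Set.image_insert_eq, evalPair]

theorem Gsub_countable (σ₀ σ₁ : Polynomial ℂ) :
    (Gsub σ₀ σ₁ : Set (Polynomial ℂ × Polynomial ℂ)).Countable := by
  have : AddGroup.FG (Gsub σ₀ σ₁) := by
    rw [AddGroup.fg_iff_addSubgroup_fg, AddSubgroup.fg_iff]
    exact ⟨_, rfl, by simp⟩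
  have : Countable (Gsub σ₀ σ₁) := by
    have := AddGroup.fg_iff_addMonoid_fg.1 this
    have : Module.Finite ℤ (Gsub σ₀ σ₁) := Module.Finite.iff_addGroup_fg.2 ‹_›
    obtain ⟨n, f, hf⟩ := Module.Finite.exists_fin' ℤ (Gsub σ₀ σ₁)
    exact hf.countable
  exact Set.countable_coe_iff.1 this

theorem countable_of_notMem (σ₀ σ₁ p q : Polynomial ℂ) (h : (p, q) ∉ Gsub σ₀ σ₁) :
    Set.Countable {s : ℂ | (p.eval s, q.eval s) ∈ Gam σ₀ σ₁ s} := by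
  have hsub : {s : ℂ | (p.eval s, q.eval s) ∈ Gam σ₀ σ₁ s} ⊆
      ⋃ g ∈ (Gsub σ₀ σ₁ : Set (Polynomial ℂ × Polynomial ℂ)),
        {s : ℂ | g.1.eval s = p.eval s ∧ g.2.eval s = q.eval s} := by
    intro s hs
    rw [Set.mem_setOf_eq, Gam_eq_map] at hs
    obtain ⟨g, hg, e⟩ := hs
    refine Set.mem_biUnion hg ?_
    exact ⟨congrArg Prod.fst e, congrArg Prod.snd e⟩
  refine Set.Countable.mono hsub ((Gsub_countable σ₀ σ₁).biUnion ?_)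
  rintro ⟨g₁, g₂⟩ hg
  by_contra hc
  have hinf : Set.Infinite {s : ℂ | g₁.eval s = p.eval s ∧ g₂.eval s = q.eval s} :=
    fun hf => hc hf.countable
  apply h
  have e1 : g₁ = p := Polynomial.eq_of_infinite_eval_eq _ _ (hinf.mono fun s hs => hs.1)
  have e2 : g₂ = q := Polynomial.eq_of_infinite_eval_eq _ _ (hinf.mono fun s hs => hs.2)
  rw [← e1, ← e2]
  exact hg

/-- For any pair `(p, q)` of polynomials of degree at most `a`, the set
`{ s ∈ ℂ : (p(s), q(s)) ∈ Γ(s) }` is either all of `ℂ` — which happens exactly when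
`(p, q) ∈ G` — or countable. -/
theorem lattice_value_set_univ_or_countable
    (a : ℕ) (ha : 1 ≤ a) (σ₀ σ₁ : Polynomial ℂ)
    (h0 : σ₀.degree ≤ (a : WithBot ℕ)) (h1 : σ₁.degree ≤ (a : WithBot ℕ))
    (p q : Polynomial ℂ) (hp : p.degree ≤ (a : WithBot ℕ)) (hq : q.degree ≤ (a : WithBot ℕ)) :
    ({s : ℂ | (p.eval s, q.eval s) ∈ Gam σ₀ σ₁ s} = Set.univ ↔ (p, q) ∈ Gsub σ₀ σ₁) ∧
      ({s : ℂ | (p.eval s, q.eval s) ∈ Gam σ₀ σ₁ s} = Set.univ ∨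
        Set.Countable {s : ℂ | (p.eval s, q.eval s) ∈ Gam σ₀ σ₁ s}) := by
  have key : (p, q) ∈ Gsub σ₀ σ₁ →
      {s : ℂ | (p.eval s, q.eval s) ∈ Gam σ₀ σ₁ s} = Set.univ := by
    intro h
    refine Set.eq_univ_of_forall fun s => ?_
    rw [Set.mem_setOf_eq, Gam_eq_map]
    exact ⟨(p, q), h, rfl⟩
  refine ⟨⟨fun hu => ?_, key⟩, ?_⟩
  · by_contra h
    have := countable_of_notMem σ₀ σ₁ p q h
    rw [hu] at this
    exact not_countable_complex this
  · by_cases h : (p, q) ∈ Gsub σ₀ σ₁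
    · exact Or.inl (key h)
    · exact Or.inr (countable_of_notMem σ₀ σ₁ p q h)
end

section
/- For every (z, w) ∈ ℂ² with (z, w) ≠ (0, 0), the four vectors (z, w), (i·z, −i·w), (−w, z), (−i·w, −i·z) are linearly independent over ℝ, hence form a basis of ℂ² regarded as a 4-dimensional real vector space; consequently their ℤ-span is a lattice (a discrete additive subgroup of full rank 4) in ℂ² ≅ ℝ⁴. -/
/-- The four vectors `(z, w)`, `(i·z, −i·w)`, `(−w, z)`, `(−i·w, −i·z)` in `ℂ²`. -/
noncomputable def latticeVecs (z w : ℂ) : Fin 4 → ℂ × ℂ :=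
  ![(z, w), (Complex.I * z, -(Complex.I * w)), (-w, z), (-(Complex.I * w), -(Complex.I * z))]

theorem latticeVecs_linInd (z w : ℂ) (h : (z, w) ≠ ((0 : ℂ), (0 : ℂ))) :
    LinearIndependent ℝ (latticeVecs z w) := by
  rw [Fintype.linearIndependent_iff]
  intro g hg
  simp only [latticeVecs, Fin.sum_univ_four, Matrix.cons_val, Prod.smul_mk, Prod.mk_add_mk,
    Prod.mk_eq_zero, Complex.real_smul] at hg
  obtain ⟨h1, h2⟩ := hg
  have hI : Complex.I ^ 2 = -1 := Complex.I_sq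
  have key : ((g 0 ^ 2 + g 1 ^ 2 + g 2 ^ 2 + g 3 ^ 2 : ℝ) : ℂ) = 0 := by
    by_contra hne
    apply h
    have hz : ((g 0 ^ 2 + g 1 ^ 2 + g 2 ^ 2 + g 3 ^ 2 : ℝ) : ℂ) * z = 0 := by
      push_cast
      linear_combination ((g 0 : ℂ) - Complex.I * g 1) * h1 + ((g 2 : ℂ) + Complex.I * g 3) * h2
        + (((g 1 : ℂ) ^ 2 + (g 3 : ℂ) ^ 2) * z) * hI
    have hw : ((g 0 ^ 2 + g 1 ^ 2 + g 2 ^ 2 + g 3 ^ 2 : ℝ) : ℂ) * w = 0 := by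
      push_cast
      linear_combination ((g 0 : ℂ) + Complex.I * g 1) * h2 - ((g 2 : ℂ) - Complex.I * g 3) * h1
        + (((g 1 : ℂ) ^ 2 + (g 3 : ℂ) ^ 2) * w) * hI
    rw [(mul_eq_zero.mp hz).resolve_left hne, (mul_eq_zero.mp hw).resolve_left hne]
  have key' : g 0 ^ 2 + g 1 ^ 2 + g 2 ^ 2 + g 3 ^ 2 = 0 := by exact_mod_cast key
  intro i
  apply pow_eq_zero_iff (two_ne_zero) |>.mp
  have := sq_nonneg (g 0)
  have := sq_nonneg (g 1)
  have := sq_nonneg (g 2)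
  have := sq_nonneg (g 3)
  fin_cases i <;> simp only [Fin.zero_eta, Fin.mk_one, Fin.reduceFinMk] <;> linarith

/-- For `(z, w) ≠ (0, 0)` in `ℂ²`, the four vectors `(z, w)`, `(i·z, −i·w)`,
`(−w, z)`, `(−i·w, −i·z)` are linearly independent over `ℝ`, span `ℂ²` as a real vector
space (hence form a real basis of `ℂ² ≅ ℝ⁴`), and their `ℤ`-span is a lattice: a discrete
additive subgroup of full rank `4` in `ℂ²`. -/
theorem latticeVecs_linearIndependent_span_discrete (z w : ℂ) (h : (z, w) ≠ ((0 : ℂ), (0 : ℂ))) :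
    LinearIndependent ℝ (latticeVecs z w) ∧
      Submodule.span ℝ (Set.range (latticeVecs z w)) = ⊤ ∧
      DiscreteTopology ↥(AddSubgroup.closure (Set.range (latticeVecs z w))) ∧
      Submodule.span ℝ
        ((AddSubgroup.closure (Set.range (latticeVecs z w)) : Set (ℂ × ℂ))) = ⊤ := by
  have hli := latticeVecs_linInd z w h
  have hsp : Submodule.span ℝ (Set.range (latticeVecs z w)) = ⊤ := by
    apply hli.span_eq_top_of_card_eq_finrank
    simp [Module.finrank_prod, Complex.finrank_real_complex]
  refine ⟨hli, hsp, ?_, ?_⟩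
  · have hd : DiscreteTopology (Submodule.span ℤ
        (Set.range (Module.Basis.mk hli hsp.ge))) := inferInstance
    rw [Module.Basis.coe_mk] at hd
    rw [← Submodule.span_int_eq_addSubgroupClosure]
    exact hd
  · rw [eq_top_iff, ← hsp]
    exact Submodule.span_mono AddSubgroup.subset_closure
end
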